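/- arXiv:math/0609774 — 2 statements merged into one kernel-verified Lean document; each statement's English description precedes it below -/
import Mathlib

section
/- Let m ≥ 0 be an integer, let d > 1 be an integer, and let L = L_{2d}^{(m)} = 2U ⊕ mE8(−1) ⊕ ⟨−2d⟩. Then the number of orbits of the stable orthogonal group Õ(L) on the set of primitive vectors r ∈ L with (r,r) = −2d and div(r) = 2d is exactly 2^{ρ(d)}, where ρ(d) is the number of distinct prime divisors of d. -/
/-- The hyperbolic plane `U`, with Gram matrix `[[0,1],[1,0]]`. -/
def gramU : Matrix (Fin 2) (Fin 2) ℤ := !![0, 1; 1, 0]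

/-- The Gram matrix of `E₈(−1)`: the negated Cartan (= Gram) matrix of the `E₈` root
lattice. -/
def gramE8neg : Matrix (Fin 8) (Fin 8) ℤ := -CartanMatrix.E₈

/-- The Gram matrix of `m` orthogonal copies of `E₈(−1)`. -/
def gramE8copies (m : ℕ) : Matrix (Fin m × Fin 8) (Fin m × Fin 8) ℤ :=
  Matrix.of fun p q => if p.1 = q.1 then gramE8neg p.2 q.2 else 0

/-- Index set for `II_{2,8m+2} = 2U ⊕ mE₈(−1)`. -/
abbrev IdxII (m : ℕ) : Type := (Fin 2 ⊕ Fin 2) ⊕ Fin m × Fin 8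

/-- The Gram matrix of the even unimodular lattice `II_{2,8m+2} = 2U ⊕ mE₈(−1)`. -/
def gramII (m : ℕ) : Matrix (IdxII m) (IdxII m) ℤ :=
  Matrix.fromBlocks (Matrix.fromBlocks gramU 0 0 gramU) 0 0 (gramE8copies m)

/-- Index set for `L_{2d}^{(m)} = 2U ⊕ mE₈(−1) ⊕ ⟨−2d⟩`. -/
abbrev IdxL (m : ℕ) : Type := IdxII m ⊕ Fin 1

/-- The Gram matrix of `L_{2d}^{(m)} = 2U ⊕ mE₈(−1) ⊕ ⟨−2d⟩`. -/
def gramL (m d : ℕ) : Matrix (IdxL m) (IdxL m) ℤ :=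
  Matrix.fromBlocks (gramII m) 0 0 !![-(2 * (d : ℤ))]

/-- The bilinear form on `ι → ℤ` associated to a Gram matrix `G`:
`⟨x, y⟩ = ∑ i j, x i * G i j * y j`. -/
def bilin {ι : Type} [Fintype ι] (G : Matrix ι ι ℤ) (x y : ι → ℤ) : ℤ :=
  ∑ i, ∑ j, x i * G i j * y j

/-- `r` is primitive: `ℚr ∩ L = ℤr`, equivalently `r` is not a nontrivial integer
multiple of a lattice vector. -/
def IsPrim {ι : Type} (r : ι → ℤ) : Prop :=
  ∀ (k : ℤ) (x : ι → ℤ), r = k • x → IsUnit k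

/-- `s = div(r)`: the positive generator of the ideal `{(r,l) : l ∈ L} ⊆ ℤ`. -/
def IsDivisorOf {ι : Type} [Fintype ι] (G : Matrix ι ι ℤ) (r : ι → ℤ) (s : ℤ) : Prop :=
  0 < s ∧ (∀ l : ι → ℤ, s ∣ bilin G r l) ∧ ∃ l : ι → ℤ, bilin G r l = s

/-- Two lattices, given as `ℤ`-modules with `ℤ`-valued bilinear forms, are isometric. -/
def LatIsometric {M N : Type} [AddCommGroup M] [Module ℤ M] [AddCommGroup N] [Module ℤ N]
    (BM : M → M → ℤ) (BN : N → N → ℤ) : Prop :=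
  ∃ e : M ≃ₗ[ℤ] N, ∀ x y : M, BN (e x) (e y) = BM x y

/-- The orthogonal complement `K_r = {x : (x,r) = 0}` of `r`, as a `ℤ`-submodule. -/
def orthC {ι : Type} [Fintype ι] (G : Matrix ι ι ℤ) (r : ι → ℤ) :
    Submodule ℤ (ι → ℤ) where
  carrier := {x | bilin G x r = 0}
  zero_mem' := by simp [bilin]
  add_mem' := by
    intro a b ha hb
    simp only [Set.mem_setOf_eq, bilin, Pi.add_apply, add_mul, Finset.sum_add_distrib] at *
    rw [ha, hb, add_zero]
  smul_mem' := by
    intro c x hx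
    simp only [Set.mem_setOf_eq, bilin, Pi.smul_apply, smul_eq_mul, mul_assoc,
      ← Finset.mul_sum] at *
    rw [hx, mul_zero]

/-- Componentwise embedding of the lattice `ι → ℤ` into `ι → ℚ` (i.e. into `L ⊗ ℚ`). -/
def castV {ι : Type} (x : ι → ℤ) : ι → ℚ := fun i => (x i : ℚ)

/-- The `ℚ`-bilinear extension of the form with Gram matrix `G` to `ι → ℚ`. -/
def bilinQ {ι : Type} [Fintype ι] (G : Matrix ι ι ℤ) (x y : ι → ℚ) : ℚ :=
  ∑ i, ∑ j, x i * (G i j : ℚ) * y j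

/-- `g` lies in the stable orthogonal group `Õ(L)` of the lattice `L = (ι → ℤ)` with
Gram matrix `G`:  `g` is an isometry of `L` whose `ℚ`-linear extension `g_ℚ` satisfies
`g_ℚ(y) − y ∈ L` for every `y` in the dual lattice `L^∨ ⊆ L ⊗ ℚ`.  (The condition
`g_ℚ(y) − y ∈ L` is expressed by clearing denominators: whenever `N • y = x` comes from
`x ∈ L`, one has `g x − x ∈ N • L`.) -/
def InStableO {ι : Type} [Fintype ι] (G : Matrix ι ι ℤ)
    (g : (ι → ℤ) ≃ₗ[ℤ] (ι → ℤ)) : Prop :=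
  (∀ x y, bilin G (g x) (g y) = bilin G x y) ∧
    ∀ y : ι → ℚ, (∀ l : ι → ℤ, ∃ a : ℤ, bilinQ G y (castV l) = (a : ℚ)) →
      ∀ (N : ℤ) (x : ι → ℤ), (N : ℚ) • y = castV x → ∃ l : ι → ℤ, g x - x = N • l

/-- The set of orbits of the stable orthogonal group `Õ(L)` on a set `S` of lattice
vectors. -/
def stableOrbits {ι : Type} [Fintype ι] (G : Matrix ι ι ℤ) (S : Set (ι → ℤ)) :
    Set (Set (ι → ℤ)) :=
  {O | ∃ r ∈ S, O = {r' | ∃ g : (ι → ℤ) ≃ₗ[ℤ] (ι → ℤ), InStableO G g ∧ g r = r'}}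

/-!
The discriminant group of `L = M ⊕ ⟨-2d⟩`, with `M` even unimodular, is `ℤ/2d`. A primitive vector
`r` of norm `-2d` and divisor `2d` has the shape `(2d • u, c)` with `c² = 1 + 2d (u, u)`, and its
class `r / 2d` in the discriminant group is `c`. As `L` contains two hyperbolic planes, the Eichler
criterion says that the orbit of `r` is determined by its norm and by this class, and the descent
behind it uses only transvections and reflections. Since `M` is even, `c` ranges over the square
roots of `1` modulo `4d`, taken modulo `2d`. Writing `c = 1 - 2y` turns them into the idempotents
`y` of `ℤ/d`, of which there are two for each prime power exactly dividing `d`.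
-/

section StableOrthogonalGroup

variable {R V : Type*} [CommRing R] [AddCommGroup V] [Module R V] {B : LinearMap.BilinForm R V}

variable (B) in
/-- The stable orthogonal group `Õ(L)` of a lattice `L` with bilinear form `B`: the isometries
acting trivially on the discriminant group `L^∨ / L`. An element of `L^∨` is written as `x / N`
with `x ∈ L`, where `N` divides every `B x l`, so that the condition reads `g x - x ∈ N • L`. -/
def stableOrthogonalGroup : Subgroup (V ≃ₗ[R] V) where
  carrier := {g | (∀ x y, B (g x) (g y) = B x y) ∧
    ∀ N : R, N ≠ 0 → ∀ x, (∀ l, N ∣ B x l) → ∃ l, g x - x = N • l}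
  one_mem' := ⟨fun _ _ => rfl, fun N _ x _ => ⟨0, by simp⟩⟩
  mul_mem' := by
    rintro g h ⟨hg, hg'⟩ ⟨hh, hh'⟩
    refine ⟨fun x y => by simp only [LinearEquiv.mul_apply, hg, hh], fun N hN x hx => ?_⟩
    obtain ⟨l, hl⟩ := hh' N hN x hx
    obtain ⟨l', hl'⟩ := hg' N hN (h x) fun l => by
      simpa only [← hh x, LinearEquiv.apply_symm_apply] using hx (h.symm l)
    exact ⟨l' + l, by rw [smul_add, ← hl, ← hl', LinearEquiv.mul_apply, sub_add_sub_cancel]⟩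
  inv_mem' := by
    rintro g ⟨hg, hg'⟩
    refine ⟨fun x y => by rw [← hg]; simp, fun N hN x hx => ?_⟩
    obtain ⟨l, hl⟩ := hg' N hN (g⁻¹ x) fun l => by
      rw [← hg]; simpa using hx (g l)
    exact ⟨-l, by rw [smul_neg, ← hl]; simp⟩

lemma apply_apply_of_mem_stableOrthogonalGroup {g : V ≃ₗ[R] V} (hg : g ∈ stableOrthogonalGroup B)
    (x y : V) : B (g x) (g y) = B x y :=
  hg.1 x y

lemma exists_sub_eq_smul_of_mem_stableOrthogonalGroup {g : V ≃ₗ[R] V}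
    (hg : g ∈ stableOrthogonalGroup B) {N : R} (hN : N ≠ 0) {x : V} (hx : ∀ l, N ∣ B x l) :
    ∃ l, g x - x = N • l :=
  hg.2 N hN x hx

lemma reflection_mem_stableOrthogonalGroup (hB : B.IsSymm) {ρ : V} {u : R} (hu : u * u = 1)
    (hρ : (u • B ρ) ρ = 2) : Module.reflection hρ ∈ stableOrthogonalGroup B := by
  have hnorm : B ρ ρ = 2 * u := by
    rw [LinearMap.smul_apply, smul_eq_mul] at hρ
    linear_combination u * hρ - B ρ ρ * hu
  refine ⟨fun x y => ?_, fun N _ x hx => ?_⟩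
  · simp only [Module.reflection_apply, map_sub, map_smul, LinearMap.sub_apply,
      LinearMap.smul_apply, smul_eq_mul, hnorm, hB.eq x ρ]
    linear_combination (2 * u * B ρ x * B ρ y) * hu
  · obtain ⟨α, hα⟩ := hx ρ
    refine ⟨-(u * α) • ρ, ?_⟩
    rw [Module.reflection_apply, LinearMap.smul_apply, hB.eq ρ x, hα, smul_eq_mul]
    module

variable (B) in
/-- The Eichler transvection `t(e, a)` of an isotropic vector `e` and a vector `a` orthogonal
to `e`. The parameter `q` stands for `B a a / 2`. -/
def eichlerTransvection (e a : V) (q : R) : V →ₗ[R] V :=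
  LinearMap.id - (B a).smulRight e + (B e).smulRight a - q • (B e).smulRight e

lemma eichlerTransvection_apply (e a : V) (q : R) (x : V) :
    eichlerTransvection B e a q x = x - B a x • e + B e x • a - (q * B e x) • e := by
  simp [eichlerTransvection, mul_smul]

lemma eichlerTransvection_neg_comp (hB : B.IsSymm) {e a : V} {q : R} (he : B e e = 0)
    (hea : B e a = 0) (ha : B a a = q + q) :
    eichlerTransvection B e (-a) q ∘ₗ eichlerTransvection B e a q = LinearMap.id := by
  have hae : B a e = 0 := by rw [hB.eq, hea]
  ext x
  simp only [LinearMap.comp_apply, LinearMap.id_apply, eichlerTransvection_apply, map_add,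
    map_sub, map_smul, map_neg, LinearMap.neg_apply, he, hae, hea, ha]
  module

lemma exists_mem_stableOrthogonalGroup_eq_eichlerTransvection (hB : B.IsSymm) {e a : V} {q : R}
    (he : B e e = 0) (hea : B e a = 0) (ha : B a a = q + q) :
    ∃ g ∈ stableOrthogonalGroup B, ∀ x, g x = x - B a x • e + B e x • a - (q * B e x) • e := by
  have hae : B a e = 0 := by rw [hB.eq, hea]
  have hright : eichlerTransvection B e a q ∘ₗ eichlerTransvection B e (-a) q = LinearMap.id := by
    simpa using eichlerTransvection_neg_comp hB (a := -a) (q := q) he (by simp [hea]) (by simp [ha])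
  refine ⟨.ofLinearMap _ _ hright (eichlerTransvection_neg_comp hB he hea ha),
    ⟨fun x y => ?_, fun N _ x hx => ?_⟩, fun x => eichlerTransvection_apply e a q x⟩
  · simp only [LinearEquiv.coe_ofLinearMap, eichlerTransvection_apply, map_add, map_sub, map_smul,
      LinearMap.add_apply, LinearMap.sub_apply, LinearMap.smul_apply, smul_eq_mul, he, hae, hea, ha,
      hB.eq x e, hB.eq x a]
    ring
  · obtain ⟨α, hα⟩ := hx a
    obtain ⟨β, hβ⟩ := hx e
    refine ⟨-α • e + β • a - (q * β) • e, ?_⟩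
    rw [LinearEquiv.coe_ofLinearMap, eichlerTransvection_apply, hB.eq a, hB.eq e, hα, hβ]
    module

variable (B) in
/-- `e` and `f` form the standard basis of a hyperbolic plane `U`. -/
structure IsHyperbolicPair (e f : V) : Prop where
  left_left : B e e = 0
  right_right : B f f = 0
  left_right : B e f = 1
  right_left : B f e = 1

namespace IsHyperbolicPair

variable {e f : V}

lemma symm (h : IsHyperbolicPair B e f) : IsHyperbolicPair B f e :=
  ⟨h.right_right, h.left_left, h.right_left, h.left_right⟩

lemma exists_apply_eq_swap (hB : B.IsSymm) (h : IsHyperbolicPair B e f) :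
    ∃ g ∈ stableOrthogonalGroup B, ∀ x, B f (g x) = B e x := by
  have hroot : ((-1 : R) • B (e - f)) (e - f) = 2 := by
    simp [h.left_left, h.right_right, h.left_right, h.right_left]; norm_num
  refine ⟨_, reflection_mem_stableOrthogonalGroup hB (by norm_num) hroot, fun x => ?_⟩
  simp [Module.reflection_apply, h.right_right, h.right_left]

lemma exists_apply_eq_neg_swap (hB : B.IsSymm) (h : IsHyperbolicPair B e f) :
    ∃ g ∈ stableOrthogonalGroup B, ∀ x, B f (g x) = -B e x := by
  have hroot : ((1 : R) • B (e + f)) (e + f) = 2 := by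
    simp [h.left_left, h.right_right, h.left_right, h.right_left]; norm_num
  refine ⟨_, reflection_mem_stableOrthogonalGroup hB (by norm_num) hroot, fun x => ?_⟩
  simp [Module.reflection_apply, h.right_right, h.right_left]

lemma exists_apply_eq_neg (hB : B.IsSymm) (h : IsHyperbolicPair B e f) :
    ∃ g ∈ stableOrthogonalGroup B, ∀ x, B f (g x) = -B f x := by
  obtain ⟨g, hg, hgx⟩ := h.exists_apply_eq_neg_swap hB
  obtain ⟨g', hg', hgx'⟩ := h.symm.exists_apply_eq_swap hB
  exact ⟨g * g', mul_mem hg hg', fun x => by rw [LinearEquiv.mul_apply, hgx, hgx']⟩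

end IsHyperbolicPair

variable (B) in
/-- `e, f, e', f'` form the standard basis of a sublattice `2U = U ⊕ U`. -/
structure IsHyperbolicQuadruple (e f e' f' : V) : Prop where
  fst : IsHyperbolicPair B e f
  snd : IsHyperbolicPair B e' f'
  left_left : B e e' = 0
  left_right : B e f' = 0
  right_left : B f e' = 0
  right_right : B f f' = 0

lemma IsHyperbolicQuadruple.swap_snd {e f e' f' : V} (h : IsHyperbolicQuadruple B e f e' f') :
    IsHyperbolicQuadruple B e f f' e' :=
  ⟨h.fst, h.snd.symm, h.left_right, h.left_left, h.right_right, h.right_left⟩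

end StableOrthogonalGroup

section EichlerCriterion

variable {V : Type*} [AddCommGroup V] {B : LinearMap.BilinForm ℤ V} {e f e' f' r s : V} {D : ℤ}

variable (B) in
/-- `B` is the bilinear form of a (possibly degenerate) even lattice. -/
structure IsEvenLattice : Prop where
  isSymm : B.IsSymm
  even : ∀ x, Even (B x x)

variable (B) in
/-- `D = div(r)` is the positive generator of the ideal `B(r, L)`. -/
structure HasDivisor (r : V) (D : ℤ) : Prop where
  pos : 0 < D
  dvd : ∀ l, D ∣ B r l
  exists_eq : ∃ l, B r l = D

lemma HasDivisor.apply_of_mem_stableOrthogonalGroup (hr : HasDivisor B r D) {g : V ≃ₗ[ℤ] V}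
    (hg : g ∈ stableOrthogonalGroup B) : HasDivisor B (g r) D where
  pos := hr.pos
  dvd l := by
    simpa [← apply_apply_of_mem_stableOrthogonalGroup hg r] using hr.dvd (g.symm l)
  exists_eq :=
    let ⟨l, hl⟩ := hr.exists_eq
    ⟨g l, by rw [apply_apply_of_mem_stableOrthogonalGroup hg, hl]⟩

lemma IsHyperbolicPair.exists_apply_eq_sub_smul (hL : IsEvenLattice B)
    (h : IsHyperbolicPair B e f) (hs : B e s = 0) (l : V) :
    ∃ g ∈ stableOrthogonalGroup B, g s = s - (B l s - B e l * B f s) • e := by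
  obtain ⟨q, hq⟩ := hL.even (l - B e l • f)
  obtain ⟨g, hg, hgx⟩ := exists_mem_stableOrthogonalGroup_eq_eichlerTransvection hL.isSymm
    h.left_left (a := l - B e l • f) (by simp [h.left_right]) hq
  exact ⟨g, hg, by simp [hgx, hs]⟩

lemma IsHyperbolicPair.exists_apply_ne_zero (hL : IsEvenLattice B) (h : IsHyperbolicPair B e f)
    (hr : B r ≠ 0) : ∃ g ∈ stableOrthogonalGroup B, B f (g r) ≠ 0 := by
  by_cases hfr : B f r = 0
  · by_cases her : B e r = 0
    · obtain ⟨l, hl⟩ : ∃ l, B r l ≠ 0 := by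
        by_contra! hzero
        exact hr (LinearMap.ext hzero)
      obtain ⟨g, hg, hgr⟩ := h.exists_apply_eq_sub_smul hL her l
      refine ⟨g, hg, ?_⟩
      rw [hL.isSymm.eq] at hl
      simpa [hgr, hfr, h.right_left] using hl
    · obtain ⟨g, hg, hgx⟩ := h.exists_apply_eq_swap hL.isSymm
      exact ⟨g, hg, by rwa [hgx]⟩
  · exact ⟨1, one_mem _, hfr⟩

lemma IsHyperbolicPair.exists_apply_pos (hL : IsEvenLattice B) (h : IsHyperbolicPair B e f)
    (hr : B r ≠ 0) : ∃ g ∈ stableOrthogonalGroup B, 0 < B f (g r) := by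
  obtain ⟨g, hg, hne⟩ := h.exists_apply_ne_zero hL hr
  rcases hne.lt_or_gt with hneg | hpos
  · obtain ⟨g', hg', hgx'⟩ := h.exists_apply_eq_neg hL.isSymm
    exact ⟨g' * g, mul_mem hg' hg, by rw [LinearEquiv.mul_apply, hgx']; omega⟩
  · exact ⟨g, hg, hpos⟩

variable (B) in
/-- The height `B f s` of `s` is the smallest positive height in the orbit of `s` under the stable
orthogonal group. Such vectors drive the descent in the proof of the Eichler criterion. -/
def IsHeightMinimal (f s : V) : Prop :=
  0 < B f s ∧ ∀ g ∈ stableOrthogonalGroup B, 0 < B f (g s) → B f s ≤ B f (g s)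

lemma IsHeightMinimal.apply (hs : IsHeightMinimal B f s) {g : V ≃ₗ[ℤ] V}
    (hg : g ∈ stableOrthogonalGroup B) (hgs : B f (g s) = B f s) : IsHeightMinimal B f (g s) :=
  ⟨hgs ▸ hs.1, fun g' hg' hpos => hgs ▸ hs.2 (g' * g) (mul_mem hg' hg) hpos⟩

lemma IsHyperbolicPair.exists_isHeightMinimal (hL : IsEvenLattice B) (h : IsHyperbolicPair B e f)
    (hr : B r ≠ 0) : ∃ g ∈ stableOrthogonalGroup B, IsHeightMinimal B f (g r) := by
  obtain ⟨g, ⟨hg, hpos⟩, hmin⟩ := exists_minimalFor_of_wellFoundedLT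
    (fun g => g ∈ stableOrthogonalGroup B ∧ 0 < B f (g r)) (fun g => (B f (g r)).toNat)
    (h.exists_apply_pos hL hr)
  refine ⟨g, hg, hpos, fun g' hg' hpos' => ?_⟩
  by_contra! hlt
  have := hmin (j := g' * g) ⟨mul_mem hg' hg, hpos'⟩ (by simp only [LinearEquiv.mul_apply]; omega)
  simp only [LinearEquiv.mul_apply] at this
  omega

-- `t(f, -j e')` reduces `B f' s` modulo the height `k`, and `t(e, f')` then turns the height into
-- `k - B f' s % k`.
lemma IsHeightMinimal.dvd_right (hL : IsEvenLattice B) (hH : IsHyperbolicQuadruple B e f e' f')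
    (hs : IsHeightMinimal B f s) : B f s ∣ B f' s := by
  obtain ⟨t₁, ht₁, h₁⟩ := exists_mem_stableOrthogonalGroup_eq_eichlerTransvection hL.isSymm
    hH.fst.right_right (a := -(B f' s / B f s) • e') (q := 0) (by simp [hH.right_left])
    (by simp [hH.snd.left_left])
  obtain ⟨t₂, ht₂, h₂⟩ := exists_mem_stableOrthogonalGroup_eq_eichlerTransvection hL.isSymm
    hH.fst.left_left (a := f') (q := 0) hH.left_right (by simp [hH.snd.right_right])
  have hf : B f (t₁ s) = B f s := by simp [h₁, hH.fst.right_right, hH.right_left]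
  have hf' : B f' (t₁ s) = B f' s % B f s := by
    simp only [h₁, map_add, map_sub, map_smul, smul_eq_mul, hL.isSymm.eq f' f, hH.right_right,
      hH.snd.right_left, Int.emod_def]
    ring
  have hheight : B f ((t₂ * t₁) s) = B f s - B f' s % B f s := by
    simp [h₂, hf, hf', hH.fst.right_left, hH.right_right]
  have hlt := Int.emod_lt_of_pos (B f' s) hs.1
  have hnonneg := Int.emod_nonneg (B f' s) hs.1.ne'
  have hle := hs.2 _ (mul_mem ht₂ ht₁) (by omega)
  exact Int.dvd_of_emod_eq_zero (by omega)

lemma IsHeightMinimal.exists_apply_eq_zero (hL : IsEvenLattice B)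
    (hH : IsHyperbolicQuadruple B e f e' f') (hs : IsHeightMinimal B f s) :
    ∃ g ∈ stableOrthogonalGroup B, IsHeightMinimal B f (g s) ∧ B e' (g s) = 0 := by
  obtain ⟨j, hj⟩ := hs.dvd_right hL hH.swap_snd
  obtain ⟨g, hg, hgx⟩ := exists_mem_stableOrthogonalGroup_eq_eichlerTransvection hL.isSymm
    hH.fst.right_right (a := -j • f') (q := 0) (by simp [hH.right_right])
    (by simp [hH.snd.right_right])
  refine ⟨g, hg, hs.apply hg ?_, ?_⟩
  · simp [hgx, hH.fst.right_right, hH.right_right]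
  · simp [hgx, hL.isSymm.eq e' f, hH.right_left, hH.snd.left_right, hj, mul_comm]

lemma IsHeightMinimal.dvd_apply (hL : IsEvenLattice B) (hH : IsHyperbolicQuadruple B e f e' f')
    (hs : IsHeightMinimal B f s) (hs' : B e' s = 0) (l : V) : B f s ∣ B s l := by
  obtain ⟨g, hg, hgs⟩ := hH.snd.exists_apply_eq_sub_smul hL hs' l
  have hheight : B f (g s) = B f s := by simp [hgs, hH.right_left]
  have hdvd : B f s ∣ B f' s - (B l s - B e' l * B f' s) := by
    have hdvd := (hs.apply hg hheight).dvd_right hL hH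
    rw [hheight, hgs] at hdvd
    simpa [hH.snd.right_left] using hdvd
  have hf' := hs.dvd_right hL hH
  rw [dvd_sub_right hf', dvd_sub_left (hf'.mul_left _)] at hdvd
  rwa [hL.isSymm.eq s l]

lemma HasDivisor.exists_apply_eq (hL : IsEvenLattice B) (hH : IsHyperbolicQuadruple B e f e' f')
    (hr : HasDivisor B r D) : ∃ g ∈ stableOrthogonalGroup B, B f (g r) = D := by
  have hne : B r ≠ 0 := by
    rintro hzero
    obtain ⟨l, hl⟩ := hr.exists_eq
    exact hr.pos.ne' (by rw [← hl, hzero, LinearMap.zero_apply])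
  obtain ⟨g₁, hg₁, hmin₁⟩ := hH.fst.exists_isHeightMinimal hL hne
  obtain ⟨g₂, hg₂, hmin, hzero⟩ := hmin₁.exists_apply_eq_zero hL hH
  have hdiv := (hr.apply_of_mem_stableOrthogonalGroup hg₁).apply_of_mem_stableOrthogonalGroup hg₂
  refine ⟨g₂ * g₁, mul_mem hg₂ hg₁, Int.dvd_antisymm hmin.1.le hr.pos.le ?_ ?_⟩
  · obtain ⟨l, hl⟩ := hdiv.exists_eq
    exact hl ▸ hmin.dvd_apply hL hH hzero l
  · rw [hL.isSymm.eq]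
    exact hdiv.dvd f

-- The transvection `t(f, l)` sends `r` to `s + γ • f`, and comparing norms forces `γ = 0`.
lemma exists_apply_eq_of_apply_eq (hL : IsEvenLattice B) (hf : B f f = 0) (hD : D ≠ 0)
    (hr : B f r = D) (hs : B f s = D) (hnorm : B r r = B s s) {l : V} (hl : s - r = D • l) :
    ∃ g ∈ stableOrthogonalGroup B, g r = s := by
  have hfl : B f l = 0 := by
    have : D * B f l = 0 := by
      rw [← smul_eq_mul, ← map_smul, ← hl, map_sub, hr, hs, sub_self]
    exact (mul_eq_zero.1 this).resolve_left hD
  obtain ⟨q, hq⟩ := hL.even l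
  obtain ⟨g, hg, hgx⟩ := exists_mem_stableOrthogonalGroup_eq_eichlerTransvection hL.isSymm hf hfl hq
  obtain ⟨γ, hγ⟩ : ∃ γ : ℤ, g r = s + γ • f :=
    ⟨-B l r - q * D, by rw [hgx, hr, eq_add_of_sub_eq hl]; module⟩
  have hγD : 2 * γ * D = 0 := by
    have hnorm' := apply_apply_of_mem_stableOrthogonalGroup hg r r
    simp only [hγ, map_add, map_smul, LinearMap.add_apply, LinearMap.smul_apply, smul_eq_mul,
      hL.isSymm.eq s f, hf, hs] at hnorm'
    linarith
  have hγ0 : γ = 0 := by simpa [hD] using hγD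
  exact ⟨g, hg, by rw [hγ, hγ0, zero_smul, add_zero]⟩

theorem eichler_criterion (hL : IsEvenLattice B) (hH : IsHyperbolicQuadruple B e f e' f')
    (hr : HasDivisor B r D) (hs : HasDivisor B s D) (hnorm : B r r = B s s)
    (hclass : ∃ l, s - r = D • l) : ∃ g ∈ stableOrthogonalGroup B, g r = s := by
  have hD := hr.pos.ne'
  obtain ⟨g₁, hg₁, h₁⟩ := hr.exists_apply_eq hL hH
  obtain ⟨g₂, hg₂, h₂⟩ := hs.exists_apply_eq hL hH
  obtain ⟨l, hl⟩ : ∃ l, g₂ s - g₁ r = D • l := by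
    obtain ⟨l, hl⟩ := hclass
    obtain ⟨l₁, hl₁⟩ := exists_sub_eq_smul_of_mem_stableOrthogonalGroup hg₁ hD hr.dvd
    obtain ⟨l₂, hl₂⟩ := exists_sub_eq_smul_of_mem_stableOrthogonalGroup hg₂ hD hs.dvd
    exact ⟨l - l₁ + l₂, by rw [smul_add, smul_sub, ← hl, ← hl₁, ← hl₂]; abel⟩
  have hnorm' : B (g₁ r) (g₁ r) = B (g₂ s) (g₂ s) := by
    rw [apply_apply_of_mem_stableOrthogonalGroup hg₁, apply_apply_of_mem_stableOrthogonalGroup hg₂,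
      hnorm]
  obtain ⟨g, hg, hgr⟩ :=
    exists_apply_eq_of_apply_eq hL hH.fst.right_right hD h₁ h₂ hnorm' hl
  exact ⟨g₂⁻¹ * (g * g₁), mul_mem (inv_mem hg₂) (mul_mem hg hg₁), by simp [hgr]⟩

end EichlerCriterion

section Counting

lemma ncard_image_eq_ncard_image {α β γ : Type*} {f : α → β} {g : α → γ} {s : Set α}
    (h : ∀ a ∈ s, ∀ b ∈ s, f a = f b ↔ g a = g b) : (f '' s).ncard = (g '' s).ncard := by
  have hfst : ((fun a => (f a, g a)) '' s).InjOn Prod.fst := by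
    rintro _ ⟨a, ha, rfl⟩ _ ⟨b, hb, rfl⟩ hab
    exact Prod.ext hab ((h a ha b hb).1 hab)
  have hsnd : ((fun a => (f a, g a)) '' s).InjOn Prod.snd := by
    rintro _ ⟨a, ha, rfl⟩ _ ⟨b, hb, rfl⟩ hab
    exact Prod.ext ((h a ha b hb).2 hab) hab
  simpa only [Set.image_image] using hfst.ncard_image.trans hsnd.ncard_image.symm

lemma isIdempotentElem_iff_of_isLocalRing {R : Type*} [CommRing R] [IsLocalRing R] {e : R} :
    IsIdempotentElem e ↔ e = 0 ∨ e = 1 := by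
  refine ⟨fun he => ?_, ?_⟩
  · rcases IsLocalRing.isUnit_or_isUnit_one_sub_self e with hunit | hunit
    · exact .inr (hunit.mul_left_cancel (by rw [he.eq, mul_one]))
    · exact .inl (hunit.mul_left_cancel (by rw [he.one_sub_mul_self, mul_zero]))
  · rintro (rfl | rfl)
    exacts [.zero, .one]

lemma isLocalRing_zmod_prime_pow {p k : ℕ} (hp : p.Prime) (hk : k ≠ 0) :
    IsLocalRing (ZMod (p ^ k)) := by
  have : Fact p.Prime := ⟨hp⟩
  have : Fact (1 < p ^ k) := ⟨Nat.one_lt_pow hk hp.one_lt⟩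
  exact .of_surjective' (PadicInt.toZModPow k) (ZMod.ringHom_surjective _)

lemma ncard_isIdempotentElem_zmod {d : ℕ} (hd : d ≠ 0) :
    {y : ZMod d | IsIdempotentElem y}.ncard = 2 ^ d.primeFactors.card := by
  have hlocal (p : d.primeFactors) :
      Nat.card {y : ZMod (p.1 ^ d.factorization p.1) // IsIdempotentElem y} = 2 := by
    have hp := Nat.prime_of_mem_primeFactors p.2
    have hk := (hp.factorization_pos_of_dvd hd (Nat.dvd_of_mem_primeFactors p.2)).ne'
    have := isLocalRing_zmod_prime_pow hp hk
    change Nat.card {y : ZMod (p.1 ^ d.factorization p.1) | IsIdempotentElem y} = 2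
    rw [Nat.card_coe_set_eq, ← Set.ncard_pair (zero_ne_one' (ZMod (p.1 ^ d.factorization p.1)))]
    congr 1
    ext y
    exact isIdempotentElem_iff_of_isLocalRing
  have hcrt : {y : ZMod d // IsIdempotentElem y} ≃
      ((p : d.primeFactors) → {y : ZMod (p.1 ^ d.factorization p.1) // IsIdempotentElem y}) :=
    ((ZMod.equivPi d hd).toEquiv.subtypeEquiv fun y => by
      rw [RingEquiv.toEquiv_eq_coe, IsIdempotentElem, ← (ZMod.equivPi d hd).injective.eq_iff,
        map_mul, funext_iff]
      rfl).trans
    (Equiv.subtypePiEquivPi (p := fun _ y => IsIdempotentElem y))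
  rw [← Nat.card_coe_set_eq, Set.coe_ofPred, Nat.card_congr hcrt, Nat.card_pi]
  simp [hlocal]

end Counting

section GramMatrix

lemma isPrim_and_hasDivisor_iff {ι : Type} {B : LinearMap.BilinForm ℤ (ι → ℤ)} {r : ι → ℤ} {D : ℤ}
    (hD : 0 < D) (hr : B r r = -D) : IsPrim r ∧ HasDivisor B r D ↔ ∀ l, D ∣ B r l := by
  refine ⟨fun h => h.2.dvd, fun hdvd => ⟨fun k x hx => ?_, hD, hdvd, -r, by simp [hr]⟩⟩
  obtain ⟨j, hj⟩ := hdvd x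
  have hnorm : D * (k * j) = D * (-1) := by
    rw [mul_left_comm, ← hj, ← smul_eq_mul, ← map_smul, ← hx, hr, mul_neg_one]
  exact .of_mul_eq_one (-j) (by linarith [mul_left_cancel₀ hD.ne' hnorm])

variable {ι : Type} [Fintype ι] [DecidableEq ι] {G : Matrix ι ι ℤ}

lemma bilin_eq_toBilin' (G : Matrix ι ι ℤ) (x y : ι → ℤ) : bilin G x y = G.toBilin' x y :=
  (Matrix.toBilin'_apply G x y).symm

lemma isEvenLattice_toBilin' (hG : G.IsSymm) (hdiag : ∀ i, Even (G i i)) :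
    IsEvenLattice G.toBilin' := by
  have hsymm := Matrix.isSymm_toBilin'_iff_isSymm.2 hG
  refine ⟨hsymm, fun x => ?_⟩
  rw [← Finset.univ_sum_single x]
  refine Finset.sum_induction _ (fun v => Even (G.toBilin' v v)) (fun v w hv hw => ?_)
    (by simp) fun i _ => ?_
  · obtain ⟨a, ha⟩ := hv
    obtain ⟨b, hb⟩ := hw
    refine ⟨a + b + G.toBilin' v w, ?_⟩
    simp only [map_add, LinearMap.add_apply, ha, hb, hsymm.eq w v]
    ring
  · rw [← mul_one (x i), ← smul_eq_mul, Pi.single_smul]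
    simp only [map_smul, LinearMap.smul_apply, Matrix.toBilin'_single, smul_eq_mul]
    exact ((hdiag i).mul_left (x i)).mul_left (x i)

lemma exists_eq_smul_of_forall_dvd (hG : IsUnit G.det) {D : ℤ} {u : ι → ℤ}
    (hu : ∀ l, D ∣ G.toBilin' u l) : ∃ v, u = D • v := by
  have hcoord (i : ι) : D ∣ u i := by
    have := hu (G⁻¹.mulVec (Pi.single i 1))
    rwa [Matrix.toBilin'_apply', Matrix.mulVec_mulVec, Matrix.mul_nonsing_inv G hG,
      Matrix.one_mulVec, dotProduct_single_one] at this
  choose v hv using hcoord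
  exact ⟨v, funext hv⟩

lemma bilinQ_inv_smul_castV (N : ℤ) (x l : ι → ℤ) :
    bilinQ G ((N : ℚ)⁻¹ • castV x) (castV l) = (N : ℚ)⁻¹ * G.toBilin' x l := by
  rw [← bilin_eq_toBilin']
  simp [bilin, bilinQ, castV, Finset.mul_sum, mul_assoc]

lemma forall_exists_bilinQ_eq_iff {N : ℤ} (hN : N ≠ 0) (x l : ι → ℤ) :
    (∃ a : ℤ, bilinQ G ((N : ℚ)⁻¹ • castV x) (castV l) = a) ↔ N ∣ G.toBilin' x l := by
  have hN' : (N : ℚ) ≠ 0 := Int.cast_ne_zero.2 hN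
  refine exists_congr fun a => ?_
  rw [bilinQ_inv_smul_castV, inv_mul_eq_iff_eq_mul₀ hN']
  norm_cast

lemma inStableO_iff (g : (ι → ℤ) ≃ₗ[ℤ] (ι → ℤ)) :
    InStableO G g ↔ g ∈ stableOrthogonalGroup G.toBilin' := by
  simp only [InStableO, bilin_eq_toBilin']
  refine and_congr_right fun _ => ⟨fun h N hN x hx => ?_, fun h y hy N x hyx => ?_⟩
  · exact h ((N : ℚ)⁻¹ • castV x) (fun l => (forall_exists_bilinQ_eq_iff hN x l).2 (hx l)) N x
      (smul_inv_smul₀ (Int.cast_ne_zero.2 hN) _)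
  · rcases eq_or_ne N 0 with rfl | hN
    · have hx : x = 0 := by
        ext i
        simpa [castV] using (congrFun hyx i).symm
      exact ⟨0, by simp [hx]⟩
    · obtain rfl := (eq_inv_smul_iff₀ (Int.cast_ne_zero.2 hN)).2 hyx
      exact h N hN x fun l => (forall_exists_bilinQ_eq_iff hN x l).1 (hy l)

lemma stableOrbits_eq_image (S : Set (ι → ℤ)) :
    stableOrbits G S =
      (fun r => MulAction.orbit (stableOrthogonalGroup G.toBilin') r) '' S := by
  have horbit (r : ι → ℤ) :
      {r' | ∃ g : (ι → ℤ) ≃ₗ[ℤ] (ι → ℤ), InStableO G g ∧ g r = r'} =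
        MulAction.orbit (stableOrthogonalGroup G.toBilin') r := by
    ext r'
    simp only [inStableO_iff, Set.mem_ofPred_eq, MulAction.mem_orbit_iff, Subtype.exists,
      Subgroup.mk_smul, LinearEquiv.smul_def, exists_prop]
  ext O
  simp only [stableOrbits, horbit, Set.mem_ofPred_eq, Set.mem_image]
  exact exists_congr fun r => and_congr_right fun _ => eq_comm

lemma isDivisorOf_iff_hasDivisor {r : ι → ℤ} {D : ℤ} :
    IsDivisorOf G r D ↔ HasDivisor G.toBilin' r D := by
  simp only [IsDivisorOf, bilin_eq_toBilin']
  exact ⟨fun ⟨h₁, h₂, h₃⟩ => ⟨h₁, h₂, h₃⟩, fun ⟨h₁, h₂, h₃⟩ => ⟨h₁, h₂, h₃⟩⟩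

end GramMatrix

section OrthogonalSumWithLine

variable {ι : Type} {G : Matrix ι ι ℤ} {d : ℕ}

variable (G d) in
/-- The Gram matrix of `M ⊕ ⟨-2d⟩`, where `M` is the lattice with Gram matrix `G`. -/
def gramLineSum : Matrix (ι ⊕ Fin 1) (ι ⊕ Fin 1) ℤ :=
  Matrix.fromBlocks G 0 0 !![-(2 * (d : ℤ))]

variable (d) in
/-- The class of `r / 2d` in the discriminant group `L^∨ / L ≅ ℤ/2d` of `L = M ⊕ ⟨-2d⟩` is the last
coordinate `1 - 2y` of `r`; it is recorded through `y` modulo `d`. The division is only meant for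
vectors whose last coordinate is odd. -/
def discriminantClass (r : ι ⊕ Fin 1 → ℤ) : ZMod d :=
  ((1 - r (Sum.inr 0)) / 2 : ℤ)

lemma discriminantClass_sumElim (w : ι → ℤ) (y : ℤ) :
    discriminantClass d (Sum.elim w fun _ => 1 - 2 * y) = y := by
  simp [discriminantClass]

variable [Fintype ι]

variable (G d) in
/-- The set of primitive vectors of norm `-2d` and divisor `2d` in `M ⊕ ⟨-2d⟩`. -/
def minusTwoDVectors : Set (ι ⊕ Fin 1 → ℤ) :=
  {r | IsPrim r ∧ bilin (gramLineSum G d) r r = -(2 * (d : ℤ)) ∧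
    IsDivisorOf (gramLineSum G d) r (2 * (d : ℤ))}

variable [DecidableEq ι]

lemma toBilin'_gramLineSum (r s : ι ⊕ Fin 1 → ℤ) :
    (gramLineSum G d).toBilin' r s =
      G.toBilin' (r ∘ Sum.inl) (s ∘ Sum.inl) - 2 * d * (r (Sum.inr 0) * s (Sum.inr 0)) := by
  simp only [← bilin_eq_toBilin', bilin, gramLineSum, Fintype.sum_sum_type,
    Matrix.fromBlocks_apply₁₁, Matrix.fromBlocks_apply₁₂, Matrix.fromBlocks_apply₂₁,
    Matrix.fromBlocks_apply₂₂, Matrix.zero_apply, Matrix.of_apply, Matrix.cons_val_fin_one,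
    Fin.sum_univ_one, Finset.sum_const_zero, mul_zero, zero_mul, add_zero, zero_add,
    Function.comp_apply]
  ring

lemma IsEvenLattice.gramLineSum (hG : IsEvenLattice G.toBilin') (d : ℕ) :
    IsEvenLattice (gramLineSum G d).toBilin' where
  isSymm := ⟨fun r s => by
    simp only [toBilin'_gramLineSum, hG.isSymm.eq (s ∘ Sum.inl), mul_comm]⟩
  even r := by
    rw [toBilin'_gramLineSum, mul_assoc]
    exact (hG.even _).sub (even_two_mul _)

lemma toBilin'_gramLineSum_sumElim_zero (x y : ι → ℤ) :
    (gramLineSum G d).toBilin' (Sum.elim x 0) (Sum.elim y 0) = G.toBilin' x y := by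
  simp [toBilin'_gramLineSum]

lemma IsHyperbolicPair.gramLineSum {e f : ι → ℤ} (h : IsHyperbolicPair G.toBilin' e f) (d : ℕ) :
    IsHyperbolicPair (gramLineSum G d).toBilin' (Sum.elim e 0) (Sum.elim f 0) := by
  constructor <;> rw [toBilin'_gramLineSum_sumElim_zero]
  exacts [h.left_left, h.right_right, h.left_right, h.right_left]

lemma IsHyperbolicQuadruple.gramLineSum {e f e' f' : ι → ℤ}
    (h : IsHyperbolicQuadruple G.toBilin' e f e' f') (d : ℕ) :
    IsHyperbolicQuadruple (gramLineSum G d).toBilin'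
      (Sum.elim e 0) (Sum.elim f 0) (Sum.elim e' 0) (Sum.elim f' 0) := by
  refine ⟨h.fst.gramLineSum d, h.snd.gramLineSum d, ?_, ?_, ?_, ?_⟩ <;>
    rw [toBilin'_gramLineSum_sumElim_zero]
  exacts [h.left_left, h.left_right, h.right_left, h.right_right]

lemma mem_minusTwoDVectors_iff (hd : d ≠ 0) {r : ι ⊕ Fin 1 → ℤ} :
    r ∈ minusTwoDVectors G d ↔ (gramLineSum G d).toBilin' r r = -(2 * d) ∧
      ∀ l, (2 * d : ℤ) ∣ (gramLineSum G d).toBilin' r l := by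
  simp only [minusTwoDVectors, Set.mem_ofPred_eq, bilin_eq_toBilin', isDivisorOf_iff_hasDivisor,
    and_left_comm (a := IsPrim r)]
  exact and_congr_right fun hr => isPrim_and_hasDivisor_iff (by positivity) hr

lemma sumElim_mem_minusTwoDVectors_iff (hd : d ≠ 0) {u : ι → ℤ} {y : ℤ} :
    Sum.elim ((2 * d : ℤ) • u) (fun _ => 1 - 2 * y) ∈ minusTwoDVectors G d ↔
      2 * (y * y - y) = d * G.toBilin' u u := by
  have hd' : (4 * d : ℤ) ≠ 0 := by positivity
  simp only [mem_minusTwoDVectors_iff hd, toBilin'_gramLineSum, Sum.elim_comp_inl, Sum.elim_inr,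
    map_smul, LinearMap.smul_apply, smul_eq_mul, ← mul_sub, dvd_mul_right, implies_true, and_true]
  refine ⟨fun h => mul_left_cancel₀ hd' (by linarith), fun h => by linear_combination -4 * d * h⟩

lemma exists_eq_sumElim_of_mem_minusTwoDVectors (hG : IsUnit G.det) (hd : d ≠ 0)
    {r : ι ⊕ Fin 1 → ℤ} (hr : r ∈ minusTwoDVectors G d) :
    ∃ (u : ι → ℤ) (y : ℤ), r = Sum.elim ((2 * d : ℤ) • u) (fun _ => 1 - 2 * y) := by
  obtain ⟨hnorm, hdvd⟩ := (mem_minusTwoDVectors_iff hd).1 hr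
  obtain ⟨u, hu⟩ : ∃ u : ι → ℤ, r ∘ Sum.inl = (2 * d : ℤ) • u :=
    exists_eq_smul_of_forall_dvd hG fun l => by
      simpa [toBilin'_gramLineSum] using hdvd (Sum.elim l 0)
  have hsq : r (Sum.inr 0) * r (Sum.inr 0) = 2 * (d * G.toBilin' u u) + 1 := by
    rw [toBilin'_gramLineSum, hu, map_smul, map_smul, LinearMap.smul_apply] at hnorm
    simp only [smul_eq_mul] at hnorm
    exact mul_left_cancel₀ (show (2 * d : ℤ) ≠ 0 by positivity) (by linarith)
  obtain ⟨k, hk⟩ : Odd (r (Sum.inr 0)) := (Int.odd_mul.1 ⟨_, hsq⟩).1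
  refine ⟨u, -k, ?_⟩
  rw [← Sum.elim_comp_inl_inr r, hu]
  congr 1
  ext i
  rw [Function.comp_apply, Subsingleton.elim i 0, hk]
  ring

lemma discriminantClass_eq_iff (hG : IsUnit G.det) (hd : d ≠ 0) {r s : ι ⊕ Fin 1 → ℤ}
    (hr : r ∈ minusTwoDVectors G d) (hs : s ∈ minusTwoDVectors G d) :
    discriminantClass d r = discriminantClass d s ↔ ∃ l, s - r = (2 * d : ℤ) • l := by
  obtain ⟨u, y, rfl⟩ := exists_eq_sumElim_of_mem_minusTwoDVectors hG hd hr
  obtain ⟨v, z, rfl⟩ := exists_eq_sumElim_of_mem_minusTwoDVectors hG hd hs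
  rw [discriminantClass_sumElim, discriminantClass_sumElim, ← sub_eq_zero, ← Int.cast_sub,
    ZMod.intCast_zmod_eq_zero_iff_dvd]
  constructor
  · rintro ⟨k, hk⟩
    refine ⟨Sum.elim (v - u) fun _ => k, ?_⟩
    ext (i | i)
    · simp [mul_sub]
    · simp only [Pi.sub_apply, Pi.smul_apply, Sum.elim_inr, smul_eq_mul]
      linear_combination 2 * hk
  · rintro ⟨l, hl⟩
    have hlast := congrFun hl (Sum.inr 0)
    simp only [Pi.sub_apply, Pi.smul_apply, Sum.elim_inr, smul_eq_mul] at hlast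
    exact ⟨l (Sum.inr 0), by linarith⟩

lemma orbit_eq_orbit_iff_discriminantClass_eq (hL : IsEvenLattice G.toBilin')
    (hdet : IsUnit G.det) {e f e' f' : ι → ℤ} (hH : IsHyperbolicQuadruple G.toBilin' e f e' f')
    (hd : d ≠ 0) {r s : ι ⊕ Fin 1 → ℤ} (hr : r ∈ minusTwoDVectors G d)
    (hs : s ∈ minusTwoDVectors G d) :
    MulAction.orbit (stableOrthogonalGroup (gramLineSum G d).toBilin') r =
        MulAction.orbit (stableOrthogonalGroup (gramLineSum G d).toBilin') s ↔
      discriminantClass d r = discriminantClass d s := by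
  rw [discriminantClass_eq_iff hdet hd hr hs, eq_comm, MulAction.orbit_eq_iff,
    MulAction.mem_orbit_iff]
  obtain ⟨-, hrnorm, hrdiv⟩ := hr
  obtain ⟨-, hsnorm, hsdiv⟩ := hs
  rw [bilin_eq_toBilin'] at hrnorm hsnorm
  rw [isDivisorOf_iff_hasDivisor] at hrdiv hsdiv
  constructor
  · rintro ⟨⟨g, hg⟩, rfl⟩
    exact exists_sub_eq_smul_of_mem_stableOrthogonalGroup hg (by positivity) hrdiv.dvd
  · intro hclass
    obtain ⟨g, hg, hgr⟩ := eichler_criterion (hL.gramLineSum d) (hH.gramLineSum d) hrdiv hsdiv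
      (hrnorm.trans hsnorm.symm) hclass
    exact ⟨⟨g, hg⟩, hgr⟩

lemma image_discriminantClass_minusTwoDVectors (hL : IsEvenLattice G.toBilin')
    (hdet : IsUnit G.det) {e f : ι → ℤ} (hU : IsHyperbolicPair G.toBilin' e f) (hd : d ≠ 0) :
    discriminantClass d '' minusTwoDVectors G d = {y | IsIdempotentElem y} := by
  have hidem (y : ℤ) : IsIdempotentElem (y : ZMod d) ↔ (d : ℤ) ∣ y * y - y := by
    rw [IsIdempotentElem, ← sub_eq_zero, ← ZMod.intCast_zmod_eq_zero_iff_dvd]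
    push_cast
    rfl
  ext y
  constructor
  · rintro ⟨r, hr, rfl⟩
    obtain ⟨u, y, rfl⟩ := exists_eq_sumElim_of_mem_minusTwoDVectors hdet hd hr
    rw [discriminantClass_sumElim, Set.mem_ofPred_eq, hidem]
    obtain ⟨n, hn⟩ := hL.even u
    have hy := (sumElim_mem_minusTwoDVectors_iff hd).1 hr
    exact ⟨n, by rw [hn] at hy; linarith⟩
  · obtain ⟨y, rfl⟩ := ZMod.intCast_surjective y
    intro hy
    obtain ⟨n, hn⟩ := (hidem y).1 hy
    refine ⟨_, (sumElim_mem_minusTwoDVectors_iff (u := e + n • f) hd).2 ?_,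
      discriminantClass_sumElim _ y⟩
    simp only [map_add, map_smul, LinearMap.add_apply, LinearMap.smul_apply, smul_eq_mul,
      hU.left_left, hU.left_right, hU.right_left, hU.right_right, hn]
    ring

end OrthogonalSumWithLine

section EvenUnimodularLattice

lemma gramE8copies_eq_kronecker (m : ℕ) :
    gramE8copies m = Matrix.kronecker (1 : Matrix (Fin m) (Fin m) ℤ) gramE8neg := by
  ext i j
  simp [gramE8copies, Matrix.one_apply]

lemma isSymm_gramE8copies (m : ℕ) : (gramE8copies m).IsSymm := by
  ext i j
  simp [gramE8copies, gramE8neg, eq_comm, CartanMatrix.E₈_isSymm.apply]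

lemma isSymm_gramII (m : ℕ) : (gramII m).IsSymm := by
  have hU : gramU.IsSymm := by decide
  exact (hU.fromBlocks (Matrix.transpose_zero ..) hU).fromBlocks (Matrix.transpose_zero ..)
    (isSymm_gramE8copies m)

lemma even_gramII_apply_self (m : ℕ) (i : IdxII m) : Even (gramII m i i) := by
  rcases i with (i | i) | i
  · fin_cases i <;> simp [gramII, gramU]
  · fin_cases i <;> simp [gramII, gramU]
  · simp [gramII, gramE8copies, gramE8neg, CartanMatrix.E₈_diag]

lemma isEvenLattice_gramII (m : ℕ) : IsEvenLattice (gramII m).toBilin' :=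
  isEvenLattice_toBilin' (isSymm_gramII m) (even_gramII_apply_self m)

lemma isUnit_det_gramII (m : ℕ) : IsUnit (gramII m).det := by
  have hU : gramU.det = -1 := by decide
  have hE8 : gramE8neg.det = 1 := by simp [gramE8neg, Matrix.det_neg, CartanMatrix.E₈_det]
  simp [gramII, gramE8copies_eq_kronecker, Matrix.det_kronecker, hU, hE8]

lemma isHyperbolicQuadruple_gramII (m : ℕ) :
    IsHyperbolicQuadruple (gramII m).toBilin' (Pi.single (.inl (.inl 0)) 1)
      (Pi.single (.inl (.inl 1)) 1) (Pi.single (.inl (.inr 0)) 1)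
      (Pi.single (.inl (.inr 1)) 1) := by
  refine ⟨⟨?_, ?_, ?_, ?_⟩, ⟨?_, ?_, ?_, ?_⟩, ?_, ?_, ?_, ?_⟩ <;>
    simp [Matrix.toBilin'_single, gramII, gramU]

end EvenUnimodularLattice

theorem card_orbits_of_minus_two_d_vectors_divisor_two_d_general {ι : Type} [Fintype ι]
    [DecidableEq ι] {G : Matrix ι ι ℤ} (hL : IsEvenLattice G.toBilin') (hdet : IsUnit G.det)
    {e f e' f' : ι → ℤ} (hH : IsHyperbolicQuadruple G.toBilin' e f e' f') {d : ℕ} (hd : d ≠ 0) :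
    Nat.card (stableOrbits (gramLineSum G d) (minusTwoDVectors G d)) =
      2 ^ d.primeFactors.card := by
  have himage := image_discriminantClass_minusTwoDVectors hL hdet hH.fst hd
  rw [← ncard_isIdempotentElem_zmod hd, ← himage, Nat.card_coe_set_eq, stableOrbits_eq_image]
  exact ncard_image_eq_ncard_image fun r hr s hs =>
    orbit_eq_orbit_iff_discriminantClass_eq hL hdet hH hd hr hs

/-- For `d > 1`, the number of orbits of `Õ(L_{2d}^{(m)})` on the set
of primitive vectors `r` with `(r,r) = −2d` and `div(r) = 2d` is exactly `2^{ρ(d)}`,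
where `ρ(d)` is the number of distinct prime divisors of `d`. -/
theorem card_orbits_of_minus_two_d_vectors_divisor_two_d
    (m d : ℕ) (hd : 1 < d) :
    Nat.card
      ↥(stableOrbits (gramL m d)
        {r | IsPrim r ∧ bilin (gramL m d) r r = -(2 * (d : ℤ)) ∧
          IsDivisorOf (gramL m d) r (2 * (d : ℤ))}) = 2 ^ d.primeFactors.card :=
  card_orbits_of_minus_two_d_vectors_divisor_two_d_general (isEvenLattice_gramII m)
    (isUnit_det_gramII m) (isHyperbolicQuadruple_gramII m) (Nat.ne_zero_of_lt hd)
end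

section
/- Let L be a lattice (a free ℤ-module of finite rank with a nondegenerate symmetric ℤ-valued bilinear form), let r ∈ L be a primitive vector with (r,r) ≠ 0, and let K_r = {x ∈ L : (x,r) = 0}. Then the sublattice ℤr ⊕ K_r has finite index in L, and [L : ℤr ⊕ K_r] = |(r,r)| / div(r). -/
/-- `L` is a (full, integral, nondegenerate, symmetric) lattice in the rational vector
space `V` with respect to the bilinear form `B`:  it is finitely generated, spans `V`
over `ℚ`, the form is symmetric, nondegenerate, and `ℤ`-valued on `L`. -/
def IsIntLattice {V : Type} [AddCommGroup V] [Module ℚ V]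
    (B : V →ₗ[ℚ] V →ₗ[ℚ] ℚ) (L : Submodule ℤ V) : Prop :=
  L.FG ∧ Submodule.span ℚ (L : Set V) = ⊤ ∧
    (∀ x y : V, B x y = B y x) ∧
    (∀ x : V, (∀ y : V, B x y = 0) → x = 0) ∧
    (∀ x ∈ L, ∀ y ∈ L, ∃ a : ℤ, B x y = (a : ℚ))

/-- `r` is a primitive vector of `L`: `ℚr ∩ L = ℤr`. -/
def IsPrimitiveVec {V : Type} [AddCommGroup V] [Module ℚ V]
    (L : Submodule ℤ V) (r : V) : Prop :=
  r ∈ L ∧ ∀ x ∈ L, (∃ q : ℚ, x = q • r) → ∃ a : ℤ, x = a • r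

/-- `s` is the divisor `div(r)` of `r`: the positive generator of the ideal
`{(r,l) : l ∈ L} ⊆ ℤ`. -/
def IsDivOf {V : Type} [AddCommGroup V] [Module ℚ V]
    (B : V →ₗ[ℚ] V →ₗ[ℚ] ℚ) (L : Submodule ℤ V) (r : V) (s : ℤ) : Prop :=
  0 < s ∧ (∀ l ∈ L, ∃ a : ℤ, B r l = ((s * a : ℤ) : ℚ)) ∧ ∃ l ∈ L, B r l = (s : ℚ)

/-- The orthogonal complement `K_r = {x ∈ L : (x,r) = 0}` of `r` in `L`, as a
`ℤ`-submodule of the ambient space. -/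
def orthCompl {V : Type} [AddCommGroup V] [Module ℚ V]
    (B : V →ₗ[ℚ] V →ₗ[ℚ] ℚ) (L : Submodule ℤ V) (r : V) : Submodule ℤ V :=
  L ⊓ (LinearMap.ker (B.flip r)).restrictScalars ℤ

/-! Pairing with `r` is a homomorphism `L → ℚ` whose image is the infinite cyclic group generated
by `div(r)` and whose kernel is `K_r`. The index of a subgroup containing the kernel can be computed
in the image, where `ℤr ⊕ K_r` becomes the subgroup generated by `(r,r)`. -/

theorem relIndex_zmultiples_zsmul {A : Type*} [AddGroup A] {b : A} (hb : ¬IsOfFinAddOrder b)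
    (n : ℤ) :
    (AddSubgroup.zmultiples (n • b)).relIndex (AddSubgroup.zmultiples b) = n.natAbs := by
  let φ : ℤ →+ A := zmultiplesHom A b
  have hφ : Function.Injective φ := injective_zsmul_iff_not_isOfFinAddOrder.mpr hb
  have hn : (AddSubgroup.zmultiples n).map φ = AddSubgroup.zmultiples (n • b) :=
    φ.map_zmultiples n
  have htop : (⊤ : AddSubgroup ℤ).map φ = AddSubgroup.zmultiples b :=
    φ.range_eq_map.symm
  rw [← hn, ← htop, AddSubgroup.relIndex_map_map_of_injective _ _ hφ,
    AddSubgroup.relIndex_top_right, Int.index_zmultiples]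

theorem index_zmultiples_sup_ker {G A : Type*} [AddGroup G] [AddGroup A] (f : G →+ A) (a : G) :
    (AddSubgroup.zmultiples a ⊔ f.ker).index = (AddSubgroup.zmultiples (f a)).relIndex f.range := by
  rw [← AddSubgroup.comap_map_eq, AddSubgroup.index_comap, AddMonoidHom.map_zmultiples]

theorem card_quotient_span_singleton_sup_ker {M N : Type*} [AddCommGroup M] [AddCommGroup N]
    (f : M →ₗ[ℤ] N) {a : M} {b : N} {n : ℤ} (hb : ¬IsOfFinAddOrder b)
    (hrange : LinearMap.range f = Submodule.span ℤ {b}) (ha : f a = n • b) :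
    Nat.card (M ⧸ (Submodule.span ℤ {a} ⊔ LinearMap.ker f)) = n.natAbs := by
  have hrange' : f.toAddMonoidHom.range = AddSubgroup.zmultiples b := by
    rw [← LinearMap.range_toAddSubgroup, hrange,
      Submodule.span_singleton_toAddSubgroup_eq_zmultiples]
  calc
    _ = (AddSubgroup.zmultiples a ⊔ f.toAddMonoidHom.ker).index := by
      rw [← Submodule.cardQuot_apply, Submodule.cardQuot, Submodule.sup_toAddSubgroup,
        Submodule.span_singleton_toAddSubgroup_eq_zmultiples, LinearMap.ker_toAddSubgroup]
    _ = (AddSubgroup.zmultiples (n • b)).relIndex (AddSubgroup.zmultiples b) := by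
      rw [index_zmultiples_sup_ker, hrange', LinearMap.toAddMonoidHom_coe, ha]
    _ = n.natAbs := relIndex_zmultiples_zsmul hb n

section Pairing

variable {V : Type} [AddCommGroup V] [Module ℚ V] {B : V →ₗ[ℚ] V →ₗ[ℚ] ℚ} {L : Submodule ℤ V}
  {r : V}

/-- The functional `l ↦ (r,l)` on the lattice `L`. It takes values in `ℚ` rather than `ℤ`, so that
it is defined without assuming the form to be integral. -/
def pairingWith (B : V →ₗ[ℚ] V →ₗ[ℚ] ℚ) (L : Submodule ℤ V) (r : V) : L →ₗ[ℤ] ℚ :=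
  (B r).restrictScalars ℤ ∘ₗ L.subtype

theorem pairingWith_apply (l : L) : pairingWith B L r l = B r l :=
  rfl

theorem range_pairingWith {s : ℤ} (hs : IsDivOf B L r s) :
    LinearMap.range (pairingWith B L r) = Submodule.span ℤ {(s : ℚ)} := by
  obtain ⟨-, hdvd, l, hl, hls⟩ := hs
  apply le_antisymm
  · rintro _ ⟨x, rfl⟩
    obtain ⟨a, ha⟩ := hdvd x x.2
    refine Submodule.mem_span_singleton.mpr ⟨a, ?_⟩
    rw [pairingWith_apply, ha, zsmul_eq_mul, Int.cast_mul, mul_comm]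
  · exact (Submodule.span_singleton_le_iff_mem _ _).mpr ⟨⟨l, hl⟩, hls⟩

theorem map_ker_pairingWith (hB : B.IsRefl) :
    (LinearMap.ker (pairingWith B L r)).map L.subtype = orthCompl B L r := by
  have hker : LinearMap.ker (B r) = LinearMap.ker (B.flip r) :=
    Submodule.ext fun _ => hB.eq_iff
  rw [pairingWith, LinearMap.ker_comp, Submodule.map_comap_subtype,
    LinearMap.ker_restrictScalars, hker, orthCompl]

theorem comap_span_singleton_sup_orthCompl (hB : B.IsRefl) (hr : r ∈ L) :
    (Submodule.span ℤ {r} ⊔ orthCompl B L r).comap L.subtype =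
      Submodule.span ℤ {⟨r, hr⟩} ⊔ LinearMap.ker (pairingWith B L r) := by
  have hspan : (Submodule.span ℤ {(⟨r, hr⟩ : L)}).map L.subtype = Submodule.span ℤ {r} := by
    rw [Submodule.map_span, Set.image_singleton, Submodule.subtype_apply]
  rw [← hspan, ← map_ker_pairingWith hB, ← Submodule.map_sup,
    Submodule.comap_map_eq_of_injective L.injective_subtype]

theorem card_quotient_span_singleton_sup_orthCompl (hB : B.IsRefl) (hr : r ∈ L) {s t : ℤ}
    (hs : IsDivOf B L r s) (ht : B r r = (s * t : ℤ)) :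
    Nat.card (L ⧸ (Submodule.span ℤ {r} ⊔ orthCompl B L r).comap L.subtype) = t.natAbs := by
  have hs_order : ¬IsOfFinAddOrder (s : ℚ) :=
    not_isOfFinAddOrder_of_isAddTorsionFree (Int.cast_ne_zero.mpr hs.1.ne')
  have hrr : pairingWith B L r ⟨r, hr⟩ = t • (s : ℚ) := by
    rw [pairingWith_apply, ht, zsmul_eq_mul, Int.cast_mul, mul_comm]
  rw [comap_span_singleton_sup_orthCompl hB hr]
  exact card_quotient_span_singleton_sup_ker _ hs_order (range_pairingWith hs) hrr

end Pairing

theorem index_of_orthogonal_splitting_general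
    {V : Type} [AddCommGroup V] [Module ℚ V]
    (B : V →ₗ[ℚ] V →ₗ[ℚ] ℚ) (L : Submodule ℤ V) (hB : B.IsRefl)
    (r : V) (hr : r ∈ L) (hne : B r r ≠ 0)
    (s : ℤ) (hs : IsDivOf B L r s) :
    0 < Nat.card
        (↥L ⧸ (Submodule.comap L.subtype (Submodule.span ℤ {r} ⊔ orthCompl B L r))) ∧
      (Nat.card
        (↥L ⧸ (Submodule.comap L.subtype (Submodule.span ℤ {r} ⊔ orthCompl B L r))) : ℚ)
        * (s : ℚ) = |B r r| := by
  obtain ⟨t, ht⟩ := hs.2.1 r hr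
  have ht_ne : t ≠ 0 := by
    rintro rfl
    exact hne (by rw [ht, mul_zero, Int.cast_zero])
  have hs_pos : (0 : ℚ) < s := Int.cast_pos.mpr hs.1
  rw [card_quotient_span_singleton_sup_orthCompl hB hr hs ht]
  refine ⟨Int.natAbs_pos.mpr ht_ne, ?_⟩
  rw [ht, Nat.cast_natAbs, Int.cast_abs, Int.cast_mul, abs_mul, abs_of_pos hs_pos, mul_comm]

/-- Let `L` be a lattice, `r ∈ L` a primitive vector with `(r,r) ≠ 0`,
and `K_r = {x ∈ L : (x,r) = 0}`.  Then `ℤr ⊕ K_r` has finite index in `L`, and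
`[L : ℤr ⊕ K_r] = |(r,r)| / div(r)`. -/
theorem index_of_orthogonal_splitting
    {V : Type} [AddCommGroup V] [Module ℚ V]
    (B : V →ₗ[ℚ] V →ₗ[ℚ] ℚ) (L : Submodule ℤ V)
    (hlat : IsIntLattice B L)
    (r : V) (hprim : IsPrimitiveVec L r) (hne : B r r ≠ 0)
    (s : ℤ) (hs : IsDivOf B L r s) :
    0 < Nat.card
        (↥L ⧸ (Submodule.comap L.subtype (Submodule.span ℤ {r} ⊔ orthCompl B L r))) ∧
      (Nat.card
        (↥L ⧸ (Submodule.comap L.subtype (Submodule.span ℤ {r} ⊔ orthCompl B L r))) : ℚ)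
        * (s : ℚ) = |B r r| :=
  index_of_orthogonal_splitting_general B L (fun x y h => (hlat.2.2.1 y x).trans h)
    r hprim.1 hne s hs
end
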